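/- Let n ≥ 3 be an integer, let η > 0, and let m, α, β satisfy 0 < m ≤ (n−2)/n, β > 0, α > 0, and α ≤ β·(n−2)/m. Let v be a radial solution of (E) on [0,∞), and set C₁ = (2β + |α|/n)·max(1,η)² / (n−1). Then for every r₀ > 0 and all r₁, r₂ ∈ [0, r₀], |v(r₁) − v(r₂)| ≤ C₁·r₀·|r₁ − r₂|. -/

import Mathlib

open Real Set Filter

/-- `v` is a radial solution of the elliptic equation
`((n-1)/m)·((v^m)'' + ((n-1)/r)(v^m)') + α v + β r v' = 0` on `[0, ∞)`
with `v > 0`, `v(0) = η`, `v'(0) = 0`. -/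
def IsRadialSol (n : ℕ) (m α β η : ℝ) (v : ℝ → ℝ) : Prop :=
  (∀ r ∈ Set.Ici (0:ℝ), 0 < v r) ∧
  ContinuousOn v (Set.Ici (0:ℝ)) ∧
  ContDiffOn ℝ 2 v (Set.Ioi (0:ℝ)) ∧
  HasDerivWithinAt v 0 (Set.Ici (0:ℝ)) 0 ∧
  v 0 = η ∧
  ∀ r ∈ Set.Ioi (0:ℝ),
    (((n : ℝ) - 1) / m) * (deriv (deriv (fun s => v s ^ m)) r
      + (((n : ℝ) - 1) / r) * deriv (fun s => v s ^ m) r)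
    + α * v r + β * r * deriv v r = 0

open scoped Topology

/-!
With the flux `φ = r ^ (n - 1) * (v ^ m)' / m = r ^ (n - 1) * v ^ (m - 1) * v'` the equation reads
`(n - 1) * φ' = -r ^ (n - 1) * (α * v + β * r * v')`. A priori `v'` need not be continuous at `0`,
but by the mean value theorem `v'`, and hence `φ`, has the cluster value `0` there. Where `φ > 0`
also `v' > 0` and so `φ' ≤ 0`; thus `φ` cannot become positive, which gives `v' ≤ 0` and `v ≤ η`.
Now `α * v + β * r * v' ≤ α * η`, so `φ + α * η * r ^ n / (n * (n - 1))` is nondecreasing, hence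
nonnegative, and therefore `v' ≥ -α * η ^ (2 - m) / (n * (n - 1)) * r`. The constant is `|v''(0)|`,
so it is optimal.
-/

lemma mapClusterPt_prodMk_of_tendsto {ι X Y : Type*} [TopologicalSpace X] [TopologicalSpace Y]
    {F : Filter ι} {u : ι → X} {w : ι → Y} {x : X} {y : Y}
    (hu : MapClusterPt x F u) (hw : Tendsto w F (𝓝 y)) :
    MapClusterPt (x, y) F (fun i => (u i, w i)) := by
  obtain ⟨U, hUF, hU⟩ := mapClusterPt_iff_ultrafilter.1 hu
  exact mapClusterPt_iff_ultrafilter.2 ⟨U, hUF, hU.prodMk_nhds (hw.mono_left hUF)⟩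

lemma mapClusterPt_deriv_nhdsGT {f : ℝ → ℝ} {a : ℝ} (hf : DifferentiableOn ℝ f (Ici a)) :
    MapClusterPt (derivWithin f (Ici a) a) (𝓝[>] a) (deriv f) := by
  have slope_tendsto : Tendsto (slope f a) (𝓝[>] a) (𝓝 (derivWithin f (Ici a) a)) :=
    (hasDerivWithinAt_iff_tendsto_slope' self_notMem_Ioi).1
      ((hf a self_mem_Ici).hasDerivWithinAt.mono Ioi_subset_Ici_self)
  refine mapClusterPt_iff_frequently.2 fun s hs => frequently_iff.2 fun {U} hU => ?_
  obtain ⟨b, hab, hb⟩ :=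
    mem_nhdsGT_iff_exists_Ioc_subset.1 (inter_mem hU (slope_tendsto.eventually_mem hs))
  obtain ⟨c, hc, hc_slope⟩ := exists_deriv_eq_slope' f hab
    (hf.continuousOn.mono Icc_subset_Ici_self)
    (hf.mono fun x hx => hx.1.le)
  exact ⟨c, (hb ⟨hc.1, hc.2.le⟩).1, hc_slope ▸ (hb ⟨hab, le_rfl⟩).2⟩

lemma nonpos_of_hasDerivAt_nonpos_of_mapClusterPt_zero {f f' : ℝ → ℝ} {a : ℝ}
    (hf : ∀ x > a, HasDerivAt f (f' x) x) (hf' : ∀ x > a, 0 < f x → f' x ≤ 0)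
    (h0 : MapClusterPt 0 (𝓝[>] a) f) {x : ℝ} (hx : a < x) : f x ≤ 0 := by
  by_contra! hfx
  set ε := f x / (2 * (1 + (x - a))) with hε
  have hxa : 0 < 1 + (x - a) := by linarith
  have hε_pos : 0 < ε := by positivity
  obtain ⟨b, hfb, hab, hbx⟩ : ∃ b, f b < ε ∧ b ∈ Ioo a x :=
    ((h0.frequently (gt_mem_nhds hε_pos)).and_eventually (Ioo_mem_nhdsGT hx)).exists
  -- The barrier has positive slope, so `f` cannot cross it where `f > 0` and `f' ≤ 0`.
  have barrier : f x ≤ ε * (1 + (x - b)) := by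
    refine image_le_of_deriv_right_lt_deriv_boundary (f' := f') (B' := fun _ => ε)
      (fun y hy => (hf y (hab.trans_le hy.1)).continuousAt.continuousWithinAt)
      (fun y hy => (hf y (hab.trans_le hy.1)).hasDerivWithinAt)
      (B := fun y => ε * (1 + (y - b))) (by simpa using hfb.le)
      (fun y => by
        simpa using (((hasDerivAt_id y).sub_const b).const_add 1).const_mul ε)
      (fun y hy hy_eq => ?_) ⟨hbx.le, le_rfl⟩
    have hfy : 0 < f y := hy_eq ▸ mul_pos hε_pos (by linarith [hy.1])
    exact (hf' y (hab.trans_le hy.1) hfy).trans_lt hε_pos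
  have : f x ≤ f x / 2 :=
    calc f x ≤ ε * (1 + (x - b)) := barrier
      _ ≤ ε * (1 + (x - a)) := by gcongr
      _ = f x / 2 := by rw [hε]; field_simp
  linarith

/-- The flux of `∇(v ^ m) / m` through the sphere of radius `r` in `ℝⁿ`, divided by the area of the
unit sphere. It turns the second-order terms of the radial equation into one derivative, and the
factor `1 / m` gives it the sign of `v'` also for negative `m`. -/
noncomputable def radialFlux (n : ℕ) (m : ℝ) (v : ℝ → ℝ) (r : ℝ) : ℝ :=
  r ^ (n - 1) * deriv (fun s => v s ^ m) r / m

namespace IsRadialSol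

variable {n : ℕ} {m α β η : ℝ} {v : ℝ → ℝ} {r : ℝ}

lemma pos (hv : IsRadialSol n m α β η v) (hr : 0 ≤ r) : 0 < v r := hv.1 r hr

lemma apply_zero (hv : IsRadialSol n m α β η v) : v 0 = η := hv.2.2.2.2.1

lemma initial_pos (hv : IsRadialSol n m α β η v) : 0 < η := hv.apply_zero ▸ hv.pos le_rfl

lemma continuousOn (hv : IsRadialSol n m α β η v) : ContinuousOn v (Ici 0) := hv.2.1

lemma hasDerivAt (hv : IsRadialSol n m α β η v) (hr : 0 < r) : HasDerivAt v (deriv v r) r :=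
  ((hv.2.2.1.contDiffAt (Ioi_mem_nhds hr)).differentiableAt two_ne_zero).hasDerivAt

lemma derivWithin_zero (hv : IsRadialSol n m α β η v) : derivWithin v (Ici 0) 0 = 0 :=
  hv.2.2.2.1.derivWithin (uniqueDiffOn_Ici 0 0 self_mem_Ici)

lemma differentiableOn (hv : IsRadialSol n m α β η v) : DifferentiableOn ℝ v (Ici 0) := by
  intro r (hr : 0 ≤ r)
  rcases hr.eq_or_lt with rfl | hr
  · exact hv.2.2.2.1.differentiableWithinAt
  · exact (hv.hasDerivAt hr).differentiableAt.differentiableWithinAt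

lemma hasDerivAt_deriv_rpow (hv : IsRadialSol n m α β η v) (hr : 0 < r) :
    HasDerivAt (deriv fun s => v s ^ m) (deriv (deriv fun s => v s ^ m) r) r := by
  have rpow_contDiffOn : ContDiffOn ℝ 2 (fun s => v s ^ m) (Ioi 0) := fun x hx =>
    (hv.2.2.1 x hx).rpow_const_of_ne (hv.pos (le_of_lt hx)).ne'
  have deriv_contDiffOn : ContDiffOn ℝ 1 (deriv fun s => v s ^ m) (Ioi 0) :=
    rpow_contDiffOn.deriv_of_isOpen isOpen_Ioi one_add_one_eq_two.le
  exact ((deriv_contDiffOn.contDiffAt (Ioi_mem_nhds hr)).differentiableAt one_ne_zero).hasDerivAt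

lemma radialFlux_eq (hv : IsRadialSol n m α β η v) (hm : m ≠ 0) (hr : 0 < r) :
    radialFlux n m v r = r ^ (n - 1) * (v r ^ (m - 1) * deriv v r) := by
  have deriv_rpow : deriv (fun s => v s ^ m) r = deriv v r * m * v r ^ (m - 1) :=
    ((hv.hasDerivAt hr).rpow_const (Or.inl (hv.pos hr.le).ne')).deriv
  rw [radialFlux, deriv_rpow]
  field_simp

lemma hasDerivAt_radialFlux (hv : IsRadialSol n m α β η v) (hn : 2 ≤ n) (hm : m ≠ 0)
    (hr : 0 < r) :
    HasDerivAt (radialFlux n m v)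
      (-(r ^ (n - 1) / (n - 1)) * (α * v r + β * r * deriv v r)) r := by
  have ode := hv.2.2.2.2.2 r hr
  obtain ⟨k, rfl⟩ := Nat.exists_eq_add_of_le' hn
  have hk : (k : ℝ) + 1 ≠ 0 := by positivity
  have cast_eq : ((k + 2 : ℕ) : ℝ) - 1 = k + 1 := by push_cast; ring
  rw [cast_eq] at ode ⊢
  refine (((hasDerivAt_pow (k + 1) r).mul (hv.hasDerivAt_deriv_rpow hr)).div_const m).congr_deriv ?_
  simp only [Nat.add_sub_cancel, show k + 2 - 1 = k + 1 from rfl]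
  push_cast
  field_simp at ode ⊢
  linear_combination r ^ k * ode

lemma mapClusterPt_radialFlux (hv : IsRadialSol n m α β η v) (hm : m ≠ 0) :
    MapClusterPt 0 (𝓝[>] 0) (radialFlux n m v) := by
  have deriv_cluster : MapClusterPt 0 (𝓝[>] 0) (deriv v) := by
    simpa only [hv.derivWithin_zero] using mapClusterPt_deriv_nhdsGT hv.differentiableOn
  have coeff_tendsto : Tendsto (fun r => r ^ (n - 1) * v r ^ (m - 1)) (𝓝[>] 0)
      (𝓝 (0 ^ (n - 1) * v 0 ^ (m - 1))) :=
    (((continuousOn_pow (n - 1)).mul (hv.continuousOn.rpow_const fun _ hr =>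
      Or.inl (hv.pos hr).ne')) 0 self_mem_Ici).mono_left (nhdsWithin_mono 0 Ioi_subset_Ici_self)
  have prod_cluster := (mapClusterPt_prodMk_of_tendsto deriv_cluster
    coeff_tendsto).continuousAt_comp continuous_mul.continuousAt
  rw [zero_mul] at prod_cluster
  refine prod_cluster.congrFun ?_
  filter_upwards [self_mem_nhdsWithin] with r hr
  rw [hv.radialFlux_eq hm hr, Function.comp_apply]
  ring

lemma radialFlux_nonpos (hv : IsRadialSol n m α β η v) (hn : 2 ≤ n) (hm : m ≠ 0)
    (hα : 0 ≤ α) (hβ : 0 ≤ β) (hr : 0 < r) : radialFlux n m v r ≤ 0 := by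
  refine nonpos_of_hasDerivAt_nonpos_of_mapClusterPt_zero
    (fun s hs => hv.hasDerivAt_radialFlux hn hm hs) (fun s (hs : 0 < s) flux_pos => ?_)
    (hv.mapClusterPt_radialFlux hm) hr
  have hn' : (0 : ℝ) < n - 1 := sub_pos.2 (Nat.one_lt_cast.2 hn)
  have vs_pos := hv.pos hs.le
  rw [hv.radialFlux_eq hm hs] at flux_pos
  have deriv_pos : 0 < deriv v s :=
    pos_of_mul_pos_right (pos_of_mul_pos_right flux_pos (by positivity)) (by positivity)
  exact mul_nonpos_of_nonpos_of_nonneg (neg_nonpos.2 (by positivity)) (by positivity)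

lemma deriv_nonpos (hv : IsRadialSol n m α β η v) (hn : 2 ≤ n) (hm : m ≠ 0)
    (hα : 0 ≤ α) (hβ : 0 ≤ β) (hr : 0 < r) : deriv v r ≤ 0 := by
  have flux_nonpos := hv.radialFlux_nonpos hn hm hα hβ hr
  rw [hv.radialFlux_eq hm hr, ← mul_assoc] at flux_nonpos
  exact nonpos_of_mul_nonpos_right flux_nonpos
    (mul_pos (pow_pos hr _) (rpow_pos_of_pos (hv.pos hr.le) _))

lemma le_initial (hv : IsRadialSol n m α β η v) (hn : 2 ≤ n) (hm : m ≠ 0)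
    (hα : 0 ≤ α) (hβ : 0 ≤ β) (hr : 0 ≤ r) : v r ≤ η := by
  have anti : AntitoneOn v (Ici 0) := by
    refine antitoneOn_of_deriv_nonpos (convex_Ici 0) hv.continuousOn
      (hv.differentiableOn.mono interior_subset) fun s hs => ?_
    rw [interior_Ici] at hs
    exact hv.deriv_nonpos hn hm hα hβ hs
  exact hv.apply_zero ▸ anti self_mem_Ici hr hr

lemma neg_le_radialFlux (hv : IsRadialSol n m α β η v) (hn : 2 ≤ n) (hm : m ≠ 0)
    (hα : 0 ≤ α) (hβ : 0 ≤ β) (hr : 0 < r) :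
    -(α * η / (n * (n - 1)) * r ^ n) ≤ radialFlux n m v r := by
  set κ := α * η / (n * (n - 1)) with hκ
  have hn' : (0 : ℝ) < n - 1 := sub_pos.2 (Nat.one_lt_cast.2 hn)
  have hn₀ : (n : ℝ) ≠ 0 := by positivity
  suffices -radialFlux n m v r + -(κ * r ^ n) ≤ 0 by linarith
  refine nonpos_of_hasDerivAt_nonpos_of_mapClusterPt_zero
    (f := fun s => -radialFlux n m v s + -(κ * s ^ n))
    (fun s hs => (hv.hasDerivAt_radialFlux hn hm hs).neg.add
      ((hasDerivAt_pow n s).const_mul κ).neg)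
    (fun s (hs : 0 < s) _ => ?_) ?_ hr
  · have source_le : α * v s + β * s * deriv v s ≤ α * η :=
      add_le_of_le_of_nonpos
        (mul_le_mul_of_nonneg_left (hv.le_initial hn hm hα hβ hs.le) hα)
        (mul_nonpos_of_nonneg_of_nonpos (by positivity) (hv.deriv_nonpos hn hm hα hβ hs))
    calc _ = s ^ (n - 1) / (n - 1) * (α * v s + β * s * deriv v s - α * η) := by
          rw [hκ]; field_simp; ring
      _ ≤ 0 := mul_nonpos_of_nonneg_of_nonpos (by positivity) (sub_nonpos.2 source_le)
  · have pow_tendsto : Tendsto (fun s : ℝ => κ * s ^ n) (𝓝[>] 0) (𝓝 (κ * 0 ^ n)) :=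
      (continuous_const.mul (continuous_pow n)).continuousWithinAt
    have sum_cluster := (mapClusterPt_prodMk_of_tendsto (hv.mapClusterPt_radialFlux hm)
      pow_tendsto).continuousAt_comp
      (f := fun p : ℝ × ℝ => -p.1 + -p.2) (by fun_prop)
    simpa [zero_pow (by omega : n ≠ 0), Function.comp_def] using sum_cluster

lemma neg_le_deriv (hv : IsRadialSol n m α β η v) (hn : 2 ≤ n) (hm : m ≠ 0) (hm₁ : m ≤ 1)
    (hα : 0 ≤ α) (hβ : 0 ≤ β) (hr : 0 < r) :
    -(α * η ^ (2 - m) / (n * (n - 1)) * r) ≤ deriv v r := by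
  have hη := hv.initial_pos
  have hn' : (0 : ℝ) < n - 1 := sub_pos.2 (Nat.one_lt_cast.2 hn)
  set κ := α * η / (n * (n - 1)) with hκ
  have vr_pos := hv.pos hr.le
  have neg_le_rpow_mul_deriv : -(κ * r) ≤ v r ^ (m - 1) * deriv v r := by
    refine le_of_mul_le_mul_left ?_ (pow_pos hr (n - 1))
    calc r ^ (n - 1) * -(κ * r) = -(κ * r ^ n) := by
          rw [← pow_sub_one_mul (by omega : n ≠ 0) r]; ring
      _ ≤ radialFlux n m v r := hv.neg_le_radialFlux hn hm hα hβ hr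
      _ = _ := hv.radialFlux_eq hm hr
  calc -(α * η ^ (2 - m) / (n * (n - 1)) * r) = -(η ^ (1 - m) * (κ * r)) := by
        rw [show 2 - m = 1 - m + 1 by ring, rpow_add_one hη.ne', hκ]; ring
    _ ≤ -(v r ^ (1 - m) * (κ * r)) := by
        have := rpow_le_rpow vr_pos.le (hv.le_initial hn hm hα hβ hr.le) (sub_nonneg.2 hm₁)
        gcongr
    _ ≤ v r ^ (1 - m) * (v r ^ (m - 1) * deriv v r) := by
        rw [← mul_neg]
        gcongr
    _ = deriv v r := by
        rw [← mul_assoc, ← rpow_add vr_pos]; simp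

lemma abs_derivWithin_le (hv : IsRadialSol n m α β η v) (hn : 2 ≤ n) (hm : m ≠ 0) (hm₁ : m ≤ 1)
    (hα : 0 ≤ α) (hβ : 0 ≤ β) (hr : 0 ≤ r) :
    |derivWithin v (Ici 0) r| ≤ α * η ^ (2 - m) / (n * (n - 1)) * r := by
  rcases hr.eq_or_lt with rfl | hr
  · simp [hv.derivWithin_zero]
  · rw [derivWithin_of_mem_nhds (Ici_mem_nhds hr),
      abs_of_nonpos (hv.deriv_nonpos hn hm hα hβ hr)]
    exact neg_le.1 (hv.neg_le_deriv hn hm hm₁ hα hβ hr)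

end IsRadialSol

lemma mul_rpow_div_le_mul_sq_max_div {n : ℕ} {m α β η : ℝ} (hn : 2 ≤ n) (hm₀ : 0 ≤ m)
    (hm₂ : m ≤ 2) (hβ : 0 ≤ β) (hη : 0 ≤ η) :
    α * η ^ (2 - m) / (n * (n - 1)) ≤ (2 * β + |α| / n) * (max 1 η) ^ 2 / ((n : ℝ) - 1) := by
  have hn' : (0 : ℝ) < n - 1 := sub_pos.2 (Nat.one_lt_cast.2 hn)
  have rpow_le_sq : η ^ (2 - m) ≤ max 1 η ^ 2 :=
    calc η ^ (2 - m) ≤ max 1 η ^ (2 - m) :=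
          rpow_le_rpow hη (le_max_right 1 η) (sub_nonneg.2 hm₂)
      _ ≤ max 1 η ^ (2 : ℝ) := rpow_le_rpow_of_exponent_le (le_max_left 1 η) (by linarith)
      _ = max 1 η ^ 2 := rpow_two _
  calc α * η ^ (2 - m) / (n * (n - 1)) = α / n * η ^ (2 - m) / (n - 1) := by field_simp
    _ ≤ |α| / n * max 1 η ^ 2 / (n - 1) := by
        gcongr
        exact le_abs_self α
    _ ≤ _ := by
        gcongr
        linarith

theorem stmt13_general {n : ℕ} (hn : 2 ≤ n) {m α β η : ℝ} (hm : m ≠ 0) (hm₁ : m ≤ 1)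
    (hα : 0 ≤ α) (hβ : 0 ≤ β) {v : ℝ → ℝ} (hv : IsRadialSol n m α β η v)
    {r₀ r₁ r₂ : ℝ} (h₁ : r₁ ∈ Icc 0 r₀) (h₂ : r₂ ∈ Icc 0 r₀) :
    |v r₁ - v r₂| ≤ α * η ^ (2 - m) / (n * (n - 1)) * r₀ * |r₁ - r₂| := by
  have hη := hv.initial_pos
  have hn' : (0 : ℝ) < n - 1 := sub_pos.2 (Nat.one_lt_cast.2 hn)
  refine (convex_Icc 0 r₀).norm_image_sub_le_of_norm_hasDerivWithin_le
    (f' := derivWithin v (Ici 0)) (fun r hr => ?_) (fun r hr => ?_) h₂ h₁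
  · exact (hv.differentiableOn r hr.1).hasDerivWithinAt.mono Icc_subset_Ici_self
  · calc |derivWithin v (Ici 0) r| ≤ α * η ^ (2 - m) / (n * (n - 1)) * r :=
          hv.abs_derivWithin_le hn hm hm₁ hα hβ hr.1
      _ ≤ α * η ^ (2 - m) / (n * (n - 1)) * r₀ := by
          have := hr.2
          gcongr

theorem stmt13 (n : ℕ) (hn : 3 ≤ n) (m α β η : ℝ) (hη : 0 < η)
    (hm : 0 < m) (hm' : m ≤ ((n : ℝ) - 2) / n)
    (hβ : 0 < β) (hα : 0 < α) (hαβ : α ≤ β * ((n : ℝ) - 2) / m)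
    (v : ℝ → ℝ) (hv : IsRadialSol n m α β η v)
    (C₁ : ℝ) (hC₁ : C₁ = (2 * β + |α| / n) * (max 1 η) ^ 2 / ((n : ℝ) - 1)) :
    ∀ r₀ : ℝ, 0 < r₀ → ∀ r₁ ∈ Set.Icc (0:ℝ) r₀, ∀ r₂ ∈ Set.Icc (0:ℝ) r₀,
      |v r₁ - v r₂| ≤ C₁ * r₀ * |r₁ - r₂| := by
  intro r₀ hr₀ r₁ h₁ r₂ h₂
  have hn₂ : 2 ≤ n := Nat.le_of_succ_le hn
  have hm₁ : m ≤ 1 := hm'.trans (div_le_one_of_le₀ (by linarith) n.cast_nonneg)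
  have hC : α * η ^ (2 - m) / (n * (n - 1)) ≤ C₁ :=
    hC₁ ▸ mul_rpow_div_le_mul_sq_max_div hn₂ hm.le (by linarith) hβ.le hη.le
  exact (stmt13_general hn₂ hm.ne' hm₁ hα.le hβ.le hv h₁ h₂).trans (by gcongr)
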